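/- arXiv:2302.01184 — 2 statements merged into one kernel-verified Lean document; each statement's English description precedes it below -/
import Mathlib

section
/- There is no constant C such that ‖‖R₁₂ f(x,y)‖_{L²_x}‖_{L^∞_y} ≤ C ‖‖f(x,y)‖_{L^∞_y}‖_{L²_x} for all Schwartz functions f on ℝ². -/
open MeasureTheory FourierTransform Real SchwartzMap
open scoped ENNReal

/-- The double Riesz transform `R₁₂` on `ℝ²`, realized as the Fourier multiplier
with symbol `ξ₁ξ₂/|ξ|²` (via iterated one-dimensional Fourier transforms). -/
noncomputable def doubleRiesz (f : ℝ → ℝ → ℂ) (x y : ℝ) : ℂ :=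
  𝓕⁻ (fun ξ₁ : ℝ => 𝓕⁻ (fun ξ₂ : ℝ =>
    ((ξ₁ * ξ₂ / (ξ₁ ^ 2 + ξ₂ ^ 2) : ℝ) : ℂ) *
      𝓕 (fun s : ℝ => 𝓕 (fun t : ℝ => f s t) ξ₂) ξ₁) y) x

/-!
Fix Schwartz functions `b`, `ρ` on `ℝ`, where `b` is supported in `[-1/4, 1/4]` and `ρ` is odd, and
let `f = ∑ k < N, (𝓕⁻ b · e^{2πi 2ᵏ x}) ⊗ (𝓕⁻ ρ) (2ᵏ y)`. Since `𝓕⁻ ρ` vanishes at `0` and decays at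
infinity, `∑ k, |𝓕⁻ ρ (2ᵏ y)|` is bounded uniformly in `y`, so `sup_y |f (x, y)| ≤ M |𝓕⁻ b x|` with
`M` independent of `N`. The symbol of `R₁₂`, being odd in the second frequency, turns `ρ` into a
profile whose inverse Fourier transform no longer vanishes at `0`: for `|y| ≲ 2^{-N}` each of the
`N` summands of `R₁₂ f (·, y)` has `L²` norm bounded below. Their frequencies in `x` lie in disjoint
intervals around `2ᵏ`, so by Plancherel the `L²_x` norm of `R₁₂ f (·, y)` grows like `√N`.
-/

section FourierTransform

variable {V E : Type*} [NormedAddCommGroup V] [InnerProductSpace ℝ V] [FiniteDimensional ℝ V]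
  [MeasurableSpace V] [BorelSpace V] [NormedAddCommGroup E] [NormedSpace ℂ E]

theorem fourier_sum_smul {ι : Type*} (s : Finset ι) (c : ι → ℂ) {f : ι → V → E}
    (hf : ∀ i ∈ s, Integrable (f i)) (w : V) :
    𝓕 (fun v ↦ ∑ i ∈ s, c i • f i v) w = ∑ i ∈ s, c i • 𝓕 (f i) w := by
  have integrable_smul : ∀ i ∈ s, Integrable fun v ↦ 𝐞 (-inner ℝ v w) • c i • f i v :=
    fun i hi ↦ (Real.fourierIntegral_convergent_iff w).2 ((hf i hi).smul (c i))
  simp_rw [Real.fourier_eq, Finset.smul_sum, integral_finsetSum s integrable_smul,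
    smul_comm _ (c _), integral_smul]

theorem fourierInv_sum_smul {ι : Type*} (s : Finset ι) (c : ι → ℂ) {f : ι → V → E}
    (hf : ∀ i ∈ s, Integrable (f i)) (w : V) :
    𝓕⁻ (fun v ↦ ∑ i ∈ s, c i • f i v) w = ∑ i ∈ s, c i • 𝓕⁻ (f i) w := by
  simp_rw [Real.fourierInv_eq_fourier_neg, fourier_sum_smul s c hf]

theorem norm_fourierInv_le_integral_norm (f : V → E) (w : V) : ‖𝓕⁻ f w‖ ≤ ∫ v, ‖f v‖ :=
  VectorFourier.norm_fourierIntegral_le_integral_norm 𝐞 volume (-innerₗ V) f w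

theorem fourierInv_apply_zero_of_odd {f : V → E} (hf : f.Odd) : 𝓕⁻ f 0 = 0 := by
  simp only [Real.fourierInv_eq, inner_zero_right, AddChar.map_zero_eq_one, one_smul]
  have : IsAddTorsionFree E := .of_isTorsionFree ℂ E
  rw [← self_eq_neg, ← integral_neg, ← integral_neg_eq_self]
  simp only [hf _]

theorem stronglyMeasurable_fourierInv_of_uncurry {α : Type*} [MeasurableSpace α] {f : α → V → E}
    (hf : StronglyMeasurable (Function.uncurry f)) (w : V) :
    StronglyMeasurable fun a ↦ 𝓕⁻ (f a) w := by
  simp_rw [Real.fourierInv_eq]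
  have continuous_char : Continuous fun v : V ↦ (𝐞 (inner ℝ v w) : ℂ) := by fun_prop
  exact StronglyMeasurable.integral_prod_right
    ((continuous_char.stronglyMeasurable.comp_measurable measurable_snd).smul hf)

theorem norm_fourierInv_comp_sub_right (f : V → E) (a w : V) :
    ‖𝓕⁻ (fun v ↦ f (v - a)) w‖ = ‖𝓕⁻ f w‖ := by
  have modulation := congrFun
    (VectorFourier.fourierIntegral_comp_add_right 𝐞 volume (-innerₗ V) f (-a)) w
  simp only [Function.comp_def, ← sub_eq_add_neg] at modulation
  exact (congrArg norm modulation).trans (Circle.norm_smul _ _)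

theorem fourierInv_smul_comp_inv_smul (f : V → E) {c : ℝ} (hc : c ≠ 0) (w : V) :
    𝓕⁻ (fun v ↦ |c ^ Module.finrank ℝ V|⁻¹ • f (c⁻¹ • v)) w = 𝓕⁻ f (c • w) := by
  have jacobian_ne_zero : |c ^ Module.finrank ℝ V| ≠ 0 := abs_ne_zero.2 (pow_ne_zero _ hc)
  simp_rw [Real.fourierInv_eq, smul_comm (𝐞 _) |c ^ Module.finrank ℝ V|⁻¹, integral_smul]
  rw [inv_smul_eq_iff₀ jacobian_ne_zero, ← Measure.integral_comp_inv_smul]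
  simp [real_inner_smul_left, real_inner_smul_right, hc]

theorem continuous_fourierInv_of_integrable {f : V → E} (hf : Integrable f) :
    Continuous (𝓕⁻ f) := by
  rw [Real.fourierInv_eq_fourier_comp_neg]
  exact VectorFourier.fourierIntegral_continuous Real.continuous_fourierChar continuous_inner
    hf.comp_neg

theorem integral_fourierInv_smul_eq [CompleteSpace E] {f : V → ℂ} {g : V → E} (hf : Integrable f)
    (hg : Integrable g) : ∫ w, 𝓕⁻ f w • g w = ∫ v, f v • 𝓕⁻ g v := by
  have continuous_neg_inner : Continuous fun p : V × V ↦ (-innerₗ V) p.1 p.2 :=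
    continuous_inner.neg
  have flip_eq : (-innerₗ V).flip = -innerₗ V := by
    ext; simp [real_inner_comm]
  have := VectorFourier.integral_fourierIntegral_smul_eq_flip (μ := volume) (ν := volume)
    Real.continuous_fourierChar continuous_neg_inner hf hg
  rwa [flip_eq] at this

theorem re_fourierInv_ofReal {f : V → ℝ} (hf : Integrable f) (w : V) :
    (𝓕⁻ (fun v ↦ (f v : ℂ)) w).re = ∫ v, Real.cos (2 * π * inner ℝ v w) * f v := by
  have integrable_mul : Integrable fun v ↦
      Complex.exp (↑(2 * π * inner ℝ v w) * Complex.I) • (f v : ℂ) :=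
    hf.ofReal.bdd_smul 1 (by fun_prop) (.of_forall fun v ↦ (Complex.norm_exp_ofReal_mul_I _).le)
  rw [Real.fourierInv_eq', ← RCLike.re_eq_complex_re, ← integral_re integrable_mul]
  refine integral_congr_ae (.of_forall fun v ↦ ?_)
  simp only [smul_eq_mul, RCLike.re_eq_complex_re, Complex.re_mul_ofReal,
    Complex.exp_ofReal_mul_I_re]

variable {H : Type*} [NormedAddCommGroup H] [InnerProductSpace ℂ H] [CompleteSpace H]

theorem fourierInv_toLp_ae_eq {f : V → H} (hf : Integrable f) (hf₂ : MemLp f 2) :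
    (𝓕⁻ hf₂.toLp : Lp H 2 (volume : Measure V)) =ᵐ[volume] 𝓕⁻ f := by
  set F : Lp H 2 (volume : Measure V) := 𝓕⁻ hf₂.toLp
  have locallyIntegrable_F : LocallyIntegrable F := (Lp.memLp F).locallyIntegrable one_le_two
  refine ae_eq_of_integral_contDiff_smul_eq locallyIntegrable_F
    (continuous_fourierInv_of_integrable hf).locallyIntegrable fun g g_smooth g_supp ↦ ?_
  let φ : 𝓢(V, ℂ) := HasCompactSupport.toSchwartzMap (f := fun v ↦ (g v : ℂ))
    (g_supp.comp_left Complex.ofReal_zero) (Complex.ofRealCLM.contDiff.comp g_smooth)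
  calc ∫ v, g v • F v = (F : 𝓢'(V, H)) φ := by
        rw [Lp.toTemperedDistribution_apply]; rfl
    _ = (hf₂.toLp : 𝓢'(V, H)) (𝓕⁻ φ) := by
        rw [← Lp.fourierInv_toTemperedDistribution_eq, TemperedDistribution.fourierInv_apply]
    _ = ∫ v, (𝓕⁻ φ) v • f v := by
        rw [Lp.toTemperedDistribution_apply]
        refine integral_congr_ae ?_
        filter_upwards [hf₂.coeFn_toLp] with v hv
        rw [hv]
    _ = ∫ v, g v • 𝓕⁻ f v := by
        rw [fourierInv_coe]
        exact integral_fourierInv_smul_eq φ.integrable hf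

theorem eLpNorm_fourierInv_eq {f : V → H} (hf : Integrable f) (hf₂ : MemLp f 2) :
    eLpNorm (𝓕⁻ f) 2 volume = eLpNorm f 2 volume := by
  rw [← eLpNorm_congr_ae (fourierInv_toLp_ae_eq hf hf₂), ← eLpNorm_congr_ae hf₂.coeFn_toLp,
    ← Lp.enorm_def, ← Lp.enorm_def, ← ofReal_norm, ← ofReal_norm, ← Lp.norm_fourier_eq,
    FourierTransform.fourier_fourierInv_eq]

end FourierTransform

section Lp

open scoped NNReal

variable {ι α E : Type*} [NormedAddCommGroup E]

theorem enorm_sum_rpow_of_pairwise_eq_zero {s : Finset ι} {v : ι → E}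
    (hv : (s : Set ι).Pairwise fun i j ↦ v i = 0 ∨ v j = 0) {p : ℝ} (hp : 0 < p) :
    ‖∑ i ∈ s, v i‖ₑ ^ p = ∑ i ∈ s, ‖v i‖ₑ ^ p := by
  by_cases h : ∃ i ∈ s, v i ≠ 0
  · obtain ⟨i, hi, hvi⟩ := h
    have eq_zero : ∀ j ∈ s, j ≠ i → v j = 0 := fun j hj hji ↦ (hv hj hi hji).resolve_right hvi
    rw [Finset.sum_eq_single_of_mem i hi eq_zero, Finset.sum_eq_single_of_mem i hi]
    intro j hj hji
    rw [eq_zero j hj hji, enorm_zero, ENNReal.zero_rpow_of_pos hp]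
  · push Not at h
    rw [Finset.sum_eq_zero h, enorm_zero, ENNReal.zero_rpow_of_pos hp, Finset.sum_eq_zero]
    intro i hi
    rw [h i hi, enorm_zero, ENNReal.zero_rpow_of_pos hp]

theorem eLpNorm_sum_pow_of_pairwise_disjoint_support [MeasurableSpace α] {μ : Measure α}
    {s : Finset ι} {f : ι → α → E} (hf : ∀ i ∈ s, AEStronglyMeasurable (f i) μ)
    (disjoint : (s : Set ι).Pairwise fun i j ↦
      Disjoint (Function.support (f i)) (Function.support (f j)))
    {p : ℝ≥0} (hp : p ≠ 0) :
    eLpNorm (fun a ↦ ∑ i ∈ s, f i a) p μ ^ (p : ℝ) = ∑ i ∈ s, eLpNorm (f i) p μ ^ (p : ℝ) := by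
  simp_rw [eLpNorm_nnreal_pow_eq_lintegral hp]
  rw [← lintegral_finsetSum' s fun i hi ↦ (hf i hi).enorm.pow_const _]
  refine lintegral_congr fun a ↦ enorm_sum_rpow_of_pairwise_eq_zero ?_ (by positivity)
  intro i hi j hj hij
  have not_both : ¬(f i a ≠ 0 ∧ f j a ≠ 0) :=
    fun h ↦ Set.disjoint_left.1 (disjoint hi hj hij) h.1 h.2
  tauto

theorem exists_mem_le_essSup [MeasurableSpace α] {μ : Measure α} {s : Set α}
    (hs : μ s ≠ 0) (f : α → ℝ≥0∞) : ∃ a ∈ s, f a ≤ essSup f μ :=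
  Measure.exists_mem_of_measure_ne_zero_of_ae hs (ae_restrict_of_ae (ENNReal.ae_le_essSup f))

end Lp

section SchwartzMap

open scoped NNReal ContDiff

theorem norm_prod_pow_le_add {E F : Type*} [SeminormedAddCommGroup E]
    [SeminormedAddCommGroup F] (p : E × F) (k : ℕ) :
    ‖p‖ ^ k ≤ ‖p.1‖ ^ k + ‖p.2‖ ^ k := by
  rcases max_choice ‖p.1‖ ‖p.2‖ with h | h <;> rw [Prod.norm_def, h]
  · exact le_add_of_nonneg_right (by positivity)
  · exact le_add_of_nonneg_left (by positivity)

variable {E F A : Type*} [NormedAddCommGroup E] [NormedSpace ℝ E] [NormedAddCommGroup F]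
  [NormedSpace ℝ F] [NormedRing A] [NormedAlgebra ℝ A]

theorem eLpNorm_schwartz_ne_zero [MeasurableSpace E] [OpensMeasurableSpace E]
    [SecondCountableTopologyEither E F] {μ : Measure E} [μ.IsOpenPosMeasure] {b : 𝓢(E, F)}
    (hb : b ≠ 0) {p : ℝ≥0∞} (hp : p ≠ 0) : eLpNorm b p μ ≠ 0 := by
  rw [Ne, eLpNorm_eq_zero_iff b.continuous.aestronglyMeasurable hp,
    b.continuous.ae_eq_iff_eq μ continuous_zero]
  exact fun h ↦ hb (DFunLike.coe_injective h)

theorem schwartz_norm_le_mul_norm_of_apply_zero {ψ : 𝓢(E, F)} (hψ : ψ 0 = 0) :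
    ∃ C : ℝ≥0, ∀ x, ‖ψ x‖ ≤ C * ‖x‖ := by
  obtain ⟨C, C_pos, hC⟩ := ψ.decay 0 1
  lift C to ℝ≥0 using C_pos.le
  refine ⟨C, fun x ↦ ?_⟩
  have norm_fderiv_le : ∀ z ∈ Set.univ, ‖fderiv ℝ ψ z‖ ≤ C := fun z _ ↦ by
    simpa only [pow_zero, one_mul, norm_iteratedFDeriv_one] using hC z
  simpa only [hψ, sub_zero] using convex_univ.norm_image_sub_le_of_norm_fderiv_le
    (fun _ _ ↦ ψ.differentiableAt) norm_fderiv_le (Set.mem_univ 0) (Set.mem_univ x)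

/-- The right-hand side telescopes along `x, 2x, 4x, …`. -/
theorem schwartz_norm_le_telescoping_of_apply_zero {ψ : 𝓢(E, F)} (hψ : ψ 0 = 0) :
    ∃ C : ℝ≥0, ∀ x,
      ‖ψ x‖ ≤ C * (2 * ‖x‖ / (1 + 2 * ‖x‖) - ‖x‖ / (1 + ‖x‖)) := by
  obtain ⟨C₁, near_zero⟩ := schwartz_norm_le_mul_norm_of_apply_zero hψ
  obtain ⟨C₂, C₂_pos, at_infinity⟩ := ψ.decay 2 0
  lift C₂ to ℝ≥0 using C₂_pos.le
  refine ⟨6 * (C₁ + C₂), fun x ↦ ?_⟩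
  have small := near_zero x
  have large := at_infinity x
  rw [norm_iteratedFDeriv_zero] at large
  have ha : 0 ≤ ‖x‖ := norm_nonneg x
  generalize ‖x‖ = a at *
  have difference_eq : 2 * a / (1 + 2 * a) - a / (1 + a) = a / ((1 + 2 * a) * (1 + a)) := by
    field_simp
    ring
  rw [difference_eq, ← mul_div_assoc, le_div_iff₀ (by positivity)]
  push_cast
  rcases le_total a 1 with a_le_one | one_le_a
  · calc ‖ψ x‖ * ((1 + 2 * a) * (1 + a)) ≤ C₁ * a * 6 := by gcongr ?_ * ?_; nlinarith
      _ ≤ 6 * (C₁ + C₂) * a := by linarith [mul_nonneg C₂.coe_nonneg ha]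
  · calc ‖ψ x‖ * ((1 + 2 * a) * (1 + a)) ≤ ‖ψ x‖ * (6 * a ^ 2) := by gcongr ‖ψ x‖ * ?_; nlinarith
      _ ≤ 6 * (C₁ + C₂) * 1 := by linarith [C₁.coe_nonneg]
      _ ≤ 6 * (C₁ + C₂) * a := by gcongr

theorem sum_norm_comp_two_pow_smul_le {ψ : 𝓢(E, F)} (hψ : ψ 0 = 0) :
    ∃ M : ℝ≥0, ∀ (N : ℕ) (x : E), ∑ k ∈ Finset.range N, ‖ψ ((2 : ℝ) ^ k • x)‖ ≤ M := by
  obtain ⟨C, hC⟩ := schwartz_norm_le_telescoping_of_apply_zero hψ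
  refine ⟨C, fun N x ↦ ?_⟩
  set H : ℕ → ℝ := fun k ↦ 2 ^ k * ‖x‖ / (1 + 2 ^ k * ‖x‖)
  have norm_le_sub (k : ℕ) : ‖ψ ((2 : ℝ) ^ k • x)‖ ≤ C * (H (k + 1) - H k) := by
    convert hC ((2 : ℝ) ^ k • x) using 3 <;> simp [H, norm_smul, pow_succ']; ring
  have H_le_one : H N ≤ 1 := div_le_one_of_le₀ (by linarith) (by positivity)
  have H_nonneg : 0 ≤ H 0 := by positivity
  calc ∑ k ∈ Finset.range N, ‖ψ ((2 : ℝ) ^ k • x)‖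
      ≤ ∑ k ∈ Finset.range N, C * (H (k + 1) - H k) := Finset.sum_le_sum fun k _ ↦ norm_le_sub k
    _ = C * (H N - H 0) := by rw [← Finset.mul_sum, Finset.sum_range_sub]
    _ ≤ C := mul_le_of_le_one_right C.coe_nonneg (by linarith)

theorem norm_iteratedFDeriv_comp_le_of_opNorm_le_one {G : Type*} [NormedAddCommGroup G]
    [NormedSpace ℝ G] {f : E → F} (hf : ContDiff ℝ ∞ f) {L : G →L[ℝ] E} (hL : ‖L‖ ≤ 1)
    (n : ℕ) (x : G) :
    ‖iteratedFDeriv ℝ n (f ∘ L) x‖ ≤ ‖iteratedFDeriv ℝ n f (L x)‖ := by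
  rw [L.iteratedFDeriv_comp_right hf x (mod_cast le_top)]
  refine (ContinuousMultilinearMap.norm_compContinuousLinearMap_le _ _).trans ?_
  exact mul_le_of_le_one_right (norm_nonneg _)
    (Finset.prod_le_one (fun _ _ ↦ norm_nonneg _) fun _ _ ↦ hL)

theorem norm_iteratedFDeriv_mul_prod_le {u : E → A} {v : F → A} (hu : ContDiff ℝ ∞ u)
    (hv : ContDiff ℝ ∞ v) (n : ℕ) (p : E × F) :
    ‖iteratedFDeriv ℝ n (fun q : E × F ↦ u q.1 * v q.2) p‖ ≤
      ∑ i ∈ Finset.range (n + 1), (n.choose i : ℝ) *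
        ‖iteratedFDeriv ℝ i u p.1‖ * ‖iteratedFDeriv ℝ (n - i) v p.2‖ := by
  refine (norm_iteratedFDeriv_mul_le (hu.comp contDiff_fst) (hv.comp contDiff_snd) p
    (mod_cast le_top)).trans ?_
  gcongr
  · exact norm_iteratedFDeriv_comp_le_of_opNorm_le_one hu
      (ContinuousLinearMap.norm_fst_le ℝ E F) _ p
  · exact norm_iteratedFDeriv_comp_le_of_opNorm_le_one hv
      (ContinuousLinearMap.norm_snd_le ℝ E F) _ p

/-- The tensor product `(x, y) ↦ u x * v y` of two Schwartz functions, as a Schwartz function on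
the product space. -/
noncomputable def schwartzTensor (u : 𝓢(E, A)) (v : 𝓢(F, A)) : 𝓢(E × F, A) where
  toFun p := u p.1 * v p.2
  smooth' := ((u.smooth ⊤).comp contDiff_fst).mul ((v.smooth ⊤).comp contDiff_snd)
  decay' k n := by
    choose Cu Cu_pos hu using u.decay
    choose Cv _ hv using v.decay
    refine ⟨∑ i ∈ Finset.range (n + 1), (n.choose i : ℝ) *
      (Cu k i * Cv 0 (n - i) + Cu 0 i * Cv k (n - i)), fun p ↦ ?_⟩
    refine (mul_le_mul_of_nonneg_left (norm_iteratedFDeriv_mul_prod_le (u.smooth ⊤) (v.smooth ⊤)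
      n p) (by positivity)).trans ?_
    rw [Finset.mul_sum]
    refine Finset.sum_le_sum fun i _ ↦ ?_
    have hu₀ := hu 0 i p.1
    have hv₀ := hv 0 (n - i) p.2
    rw [pow_zero, one_mul] at hu₀ hv₀
    have Cu_pos₀ := Cu_pos 0 i
    have Cu_pos_k := Cu_pos k i
    calc ‖p‖ ^ k * ((n.choose i : ℝ) * ‖iteratedFDeriv ℝ i u p.1‖ *
          ‖iteratedFDeriv ℝ (n - i) v p.2‖)
        ≤ (‖p.1‖ ^ k + ‖p.2‖ ^ k) * ((n.choose i : ℝ) * ‖iteratedFDeriv ℝ i u p.1‖ *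
          ‖iteratedFDeriv ℝ (n - i) v p.2‖) := by gcongr; exact norm_prod_pow_le_add p k
      _ = (n.choose i : ℝ) * ((‖p.1‖ ^ k * ‖iteratedFDeriv ℝ i u p.1‖) *
          ‖iteratedFDeriv ℝ (n - i) v p.2‖ + ‖iteratedFDeriv ℝ i u p.1‖ *
            (‖p.2‖ ^ k * ‖iteratedFDeriv ℝ (n - i) v p.2‖)) := by ring
      _ ≤ _ := by gcongr; exacts [hu k i p.1, hv k (n - i) p.2]

@[simp]
theorem schwartzTensor_apply (u : 𝓢(E, A)) (v : 𝓢(F, A)) (p : E × F) :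
    schwartzTensor u v p = u p.1 * v p.2 := rfl

end SchwartzMap

section RieszSymbol

/-- The Fourier symbol `ξ η / (ξ² + η²)` of the double Riesz transform, equal to `0` at the
origin. -/
noncomputable def rieszSymbol (ξ η : ℝ) : ℝ := ξ * η / (ξ ^ 2 + η ^ 2)

theorem abs_rieszSymbol_le_one (ξ η : ℝ) : |rieszSymbol ξ η| ≤ 1 := by
  rw [rieszSymbol, abs_div, abs_of_nonneg (by positivity : 0 ≤ ξ ^ 2 + η ^ 2)]
  refine div_le_one_of_le₀ ?_ (by positivity)
  rw [abs_mul]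
  nlinarith [sq_nonneg (|ξ| - |η|), sq_abs ξ, sq_abs η]

theorem measurable_uncurry_rieszSymbol : Measurable (Function.uncurry rieszSymbol) := by
  unfold rieszSymbol Function.uncurry
  fun_prop

theorem rieszSymbol_mul_mul {c : ℝ} (hc : c ≠ 0) (ξ η : ℝ) :
    rieszSymbol (c * ξ) (c * η) = rieszSymbol ξ η := by
  simp only [rieszSymbol, mul_mul_mul_comm c, mul_pow, ← sq, ← mul_add]
  exact mul_div_mul_left _ _ (pow_ne_zero 2 hc)

theorem integrable_rieszSymbol_smul {E : Type*} [NormedAddCommGroup E] [NormedSpace ℝ E]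
    {f : ℝ → E} (hf : Integrable f) (ξ : ℝ) : Integrable fun η ↦ rieszSymbol ξ η • f η :=
  hf.bdd_smul 1 (measurable_uncurry_rieszSymbol.of_uncurry_left).aestronglyMeasurable
    (.of_forall fun η ↦ abs_rieszSymbol_le_one ξ η)

theorem sq_div_four_le_rieszSymbol_mul_self {a η : ℝ} (ha : a ∈ Set.Icc (3 / 4) (5 / 4))
    (hη : |η| ≤ 1) : η ^ 2 / 4 ≤ rieszSymbol a η * η := by
  obtain ⟨le_a, a_le⟩ := ha
  have sq_le_one : η ^ 2 ≤ 1 := (sq_le_one_iff_abs_le_one η).2 hη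
  have a_pos : 0 < a := by linarith
  have quarter_le : 1 / 4 ≤ a / (a ^ 2 + η ^ 2) := by
    rw [div_le_div_iff₀ (by norm_num) (by positivity)]
    nlinarith
  calc η ^ 2 / 4 = 1 / 4 * η ^ 2 := by ring
    _ ≤ a / (a ^ 2 + η ^ 2) * η ^ 2 := by gcongr
    _ = rieszSymbol a η * η := by rw [rieszSymbol]; ring

end RieszSymbol

section PartialRiesz

/-- The inner integral of the double Riesz transform: the one-dimensional Fourier multiplier in
the second variable with symbol `rieszSymbol ξ`, applied to a function given by its Fourier
transform `ρ`. -/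
noncomputable def partialRiesz (ρ : ℝ → ℂ) (ξ y : ℝ) : ℂ :=
  𝓕⁻ (fun η ↦ (rieszSymbol ξ η : ℂ) * ρ η) y

theorem norm_partialRiesz_le {ρ : ℝ → ℂ} (hρ : Integrable ρ) (ξ y : ℝ) :
    ‖partialRiesz ρ ξ y‖ ≤ ∫ η, ‖ρ η‖ := by
  refine (norm_fourierInv_le_integral_norm _ y).trans
    (integral_mono_of_nonneg (.of_forall fun _ ↦ norm_nonneg _) hρ.norm (.of_forall fun η ↦ ?_))
  simpa using mul_le_of_le_one_left (norm_nonneg (ρ η)) (abs_rieszSymbol_le_one ξ η)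

theorem stronglyMeasurable_partialRiesz {ρ : ℝ → ℂ} (hρ : StronglyMeasurable ρ) (y : ℝ) :
    StronglyMeasurable fun ξ ↦ partialRiesz ρ ξ y :=
  stronglyMeasurable_fourierInv_of_uncurry
    ((Complex.measurable_ofReal.comp measurable_uncurry_rieszSymbol).stronglyMeasurable.mul
      (hρ.comp_measurable measurable_snd)) y

theorem partialRiesz_smul_comp_inv_mul (ρ : ℝ → ℂ) {c : ℝ} (hc : c ≠ 0) (ξ y : ℝ) :
    partialRiesz (fun η ↦ |c|⁻¹ • ρ (c⁻¹ * η)) ξ y = partialRiesz ρ (c⁻¹ * ξ) (c * y) := by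
  have scaling := fourierInv_smul_comp_inv_smul
    (fun η ↦ (rieszSymbol (c⁻¹ * ξ) η : ℂ) * ρ η) hc y
  simpa only [partialRiesz, smul_eq_mul, ← mul_smul_comm, rieszSymbol_mul_mul (inv_ne_zero hc),
    Module.finrank_self, pow_one] using scaling

theorem half_le_cos_two_pi_mul {η w : ℝ} (hη : |η| ≤ 1) (hw : |w| ≤ 1 / 6) :
    1 / 2 ≤ cos (2 * π * (η * w)) := by
  have abs_le : |2 * π * (η * w)| ≤ π / 3 := by
    calc |2 * π * (η * w)| = 2 * π * (|η| * |w|) := by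
          rw [abs_mul, abs_mul η, abs_of_pos two_pi_pos]
      _ ≤ 2 * π * (1 * (1 / 6)) := by gcongr
      _ = π / 3 := by ring
  rw [← cos_abs, ← cos_pi_div_three]
  exact cos_le_cos_of_nonneg_of_le_pi (abs_nonneg _) (by linarith [pi_pos]) abs_le

theorem integral_div_eight_le_re_partialRiesz {χ : ℝ → ℝ} (hχ : Integrable fun η ↦ η * χ η)
    (χ_nonneg : ∀ η, 0 ≤ χ η) (χ_eq_zero : ∀ η, 1 ≤ |η| → χ η = 0) {a w : ℝ}
    (ha : a ∈ Set.Icc (3 / 4) (5 / 4)) (hw : |w| ≤ 1 / 6) :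
    ∫ η, η ^ 2 * χ η / 8 ≤ (partialRiesz (fun η ↦ ((η * χ η : ℝ) : ℂ)) a w).re := by
  have integrable_symbol : Integrable fun η ↦ rieszSymbol a η * (η * χ η) :=
    integrable_rieszSymbol_smul hχ a
  have re_eq := re_fourierInv_ofReal integrable_symbol w
  simp only [Complex.ofReal_mul (rieszSymbol a _)] at re_eq
  rw [partialRiesz, re_eq]
  refine integral_mono_of_nonneg (.of_forall fun η ↦ ?_)
    (integrable_symbol.bdd_mul (c := 1) (by fun_prop) (.of_forall fun η ↦ abs_cos_le_one _))
    (.of_forall fun η ↦ ?_)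
  · exact div_nonneg (mul_nonneg (sq_nonneg η) (χ_nonneg η)) (by norm_num)
  · have inner_eq : inner ℝ η w = η * w := by simp [mul_comm]
    rcases le_total 1 |η| with one_le | le_one
    · simp [χ_eq_zero η one_le]
    · have symbol_le := sq_div_four_le_rieszSymbol_mul_self ha le_one
      have cos_ge := half_le_cos_two_pi_mul le_one hw
      have := χ_nonneg η
      calc η ^ 2 * χ η / 8 = 1 / 2 * (η ^ 2 / 4 * χ η) := by ring
        _ ≤ cos (2 * π * (η * w)) * (rieszSymbol a η * η * χ η) := by gcongr
        _ = cos (2 * π * inner ℝ η w) * (rieszSymbol a η * (η * χ η)) := by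
          rw [inner_eq]; ring

end PartialRiesz

section DoubleRiesz

theorem doubleRiesz_sum_mul {ι : Type*} (s : Finset ι) (u v : ι → 𝓢(ℝ, ℂ)) (x y : ℝ) :
    doubleRiesz (fun t₁ t₂ ↦ ∑ i ∈ s, 𝓕⁻ (u i) t₁ * 𝓕⁻ (v i) t₂) x y =
      𝓕⁻ (fun ξ ↦ ∑ i ∈ s, u i ξ * partialRiesz (v i) ξ y) x := by
  have fourier_snd (t₁ η : ℝ) :
      𝓕 (fun t₂ ↦ ∑ i ∈ s, 𝓕⁻ (u i) t₁ * 𝓕⁻ (v i) t₂) η = ∑ i ∈ s, 𝓕⁻ (u i) t₁ * v i η :=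
    (fourier_sum_smul s (fun i ↦ 𝓕⁻ (u i) t₁) (fun i _ ↦ (𝓕⁻ (v i)).integrable) η).trans
      (by simp only [← fourier_coe, FourierTransform.fourier_fourierInv_eq, smul_eq_mul])
  have fourier_fst (ξ η : ℝ) :
      𝓕 (fun t₁ ↦ ∑ i ∈ s, 𝓕⁻ (u i) t₁ * v i η) ξ = ∑ i ∈ s, u i ξ * v i η := by
    simp only [mul_comm _ (v _ η)]
    exact (fourier_sum_smul s (fun i ↦ v i η) (fun i _ ↦ (𝓕⁻ (u i)).integrable) ξ).trans
      (by simp only [← fourier_coe, FourierTransform.fourier_fourierInv_eq, smul_eq_mul])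
  have inner_integral (ξ : ℝ) :
      𝓕⁻ (fun η ↦ (rieszSymbol ξ η : ℂ) * ∑ i ∈ s, u i ξ * v i η) y =
        ∑ i ∈ s, u i ξ * partialRiesz (v i) ξ y := by
    have integrable_symbol_mul : ∀ i ∈ s, Integrable fun η ↦ (rieszSymbol ξ η : ℂ) * v i η :=
      fun i _ ↦ by
        simpa only [Complex.real_smul] using integrable_rieszSymbol_smul (v i).integrable ξ
    simp only [partialRiesz, ← smul_eq_mul (a := u _ ξ),
      ← fourierInv_sum_smul s _ integrable_symbol_mul]
    simp only [smul_eq_mul, Finset.mul_sum, mul_left_comm]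
  simp only [doubleRiesz, fourier_snd, fourier_fst]
  exact congrArg (fun g : ℝ → ℂ ↦ 𝓕⁻ g x) (funext inner_integral)

theorem memLp_mul_partialRiesz (u v : 𝓢(ℝ, ℂ)) (y : ℝ) (p : ℝ≥0∞) :
    MemLp (fun ξ ↦ u ξ * partialRiesz v ξ y) p volume := by
  have bounded : MemLp (fun ξ ↦ partialRiesz v ξ y) ∞ volume :=
    memLp_top_of_bound (stronglyMeasurable_partialRiesz v.continuous.stronglyMeasurable
      y).aestronglyMeasurable _ (.of_forall fun ξ ↦ norm_partialRiesz_le v.integrable ξ y)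
  exact bounded.mul' (u.memLp p volume)

theorem eLpNorm_doubleRiesz_sum_mul {ι : Type*} (s : Finset ι) (u v : ι → 𝓢(ℝ, ℂ)) (y : ℝ) :
    eLpNorm (fun x ↦
        doubleRiesz (fun t₁ t₂ ↦ ∑ i ∈ s, 𝓕⁻ (u i) t₁ * 𝓕⁻ (v i) t₂) x y) 2 volume =
      eLpNorm (fun ξ ↦ ∑ i ∈ s, u i ξ * partialRiesz (v i) ξ y) 2 volume := by
  simp only [doubleRiesz_sum_mul]
  refine eLpNorm_fourierInv_eq (integrable_finsetSum s fun i _ ↦ ?_)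
    (memLp_finsetSum s fun i _ ↦ memLp_mul_partialRiesz (u i) (v i) y 2)
  exact memLp_one_iff_integrable.1 (memLp_mul_partialRiesz (u i) (v i) y 1)

end DoubleRiesz

section Dilation

variable {V E : Type*} [NormedAddCommGroup V] [NormedAddCommGroup E] [NormedSpace ℂ E]

/-- The dilation `x ↦ |c|⁻ᵈ ρ (c⁻¹ x)` of a Schwartz function, `d` being the dimension. It
serves to multiply frequencies by `c` when `ρ` is itself a Fourier transform, whence the
normalization; `c` is a unit so that the dilation is invertible. -/
noncomputable def schwartzDilation [NormedSpace ℝ V] (c : ℝˣ) (ρ : 𝓢(V, E)) : 𝓢(V, E) :=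
  (|(c : ℝ) ^ Module.finrank ℝ V|⁻¹ : ℝ) •
    compCLMOfContinuousLinearEquiv ℂ (ContinuousLinearEquiv.smulLeft c⁻¹) ρ

theorem coe_schwartzDilation [NormedSpace ℝ V] (c : ℝˣ) (ρ : 𝓢(V, E)) :
    (schwartzDilation c ρ : V → E) =
      fun x ↦ |(c : ℝ) ^ Module.finrank ℝ V|⁻¹ • ρ ((c : ℝ)⁻¹ • x) := by
  ext x
  simp [schwartzDilation, Units.smul_def, -map_inv]

theorem fourierInv_schwartzDilation [InnerProductSpace ℝ V] [FiniteDimensional ℝ V]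
    [MeasurableSpace V] [BorelSpace V] (c : ℝˣ) (ρ : 𝓢(V, E)) (w : V) :
    𝓕⁻ (schwartzDilation c ρ) w = 𝓕⁻ ρ ((c : ℝ) • w) := by
  rw [fourierInv_coe, coe_schwartzDilation, fourierInv_smul_comp_inv_smul _ c.ne_zero,
    ← fourierInv_coe]

theorem partialRiesz_schwartzDilation (c : ℝˣ) (ρ : 𝓢(ℝ, ℂ)) (ξ y : ℝ) :
    partialRiesz (schwartzDilation c ρ) ξ y = partialRiesz ρ ((c : ℝ)⁻¹ * ξ) (c * y) := by
  simpa only [coe_schwartzDilation, Module.finrank_self, pow_one, smul_eq_mul] using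
    partialRiesz_smul_comp_inv_mul ρ c.ne_zero ξ y

end Dilation

section LacunarySum

open scoped NNReal

/-- The Schwartz function `∑ k < N, 𝓕⁻ (b (· - 2ᵏ)) ⊗ 𝓕⁻ (2⁻ᵏ ρ (2⁻ᵏ ·))`, on which the two
mixed norms are compared. In each summand both frequencies are of size `2ᵏ`. -/
noncomputable def lacunarySum (b ρ : 𝓢(ℝ, ℂ)) (N : ℕ) : 𝓢(ℝ × ℝ, ℂ) :=
  ∑ k ∈ Finset.range N, schwartzTensor (𝓕⁻ (compSubConstCLM ℂ ((2 : ℝ) ^ k) b))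
    (𝓕⁻ (schwartzDilation (Units.mk0 2 two_ne_zero ^ k) ρ))

theorem lacunarySum_apply (b ρ : 𝓢(ℝ, ℂ)) (N : ℕ) (x y : ℝ) :
    lacunarySum b ρ N (x, y) = ∑ k ∈ Finset.range N,
      𝓕⁻ (compSubConstCLM ℂ ((2 : ℝ) ^ k) b) x *
        𝓕⁻ (schwartzDilation (Units.mk0 2 two_ne_zero ^ k) ρ) y := by
  simp only [lacunarySum, sum_apply, schwartzTensor_apply]

theorem exists_norm_lacunarySum_le {ρ : 𝓢(ℝ, ℂ)} (hρ : 𝓕⁻ ρ 0 = 0) :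
    ∃ M : ℝ≥0, ∀ (b : 𝓢(ℝ, ℂ)) (N : ℕ) (x y : ℝ),
      ‖lacunarySum b ρ N (x, y)‖ ≤ M * ‖𝓕⁻ b x‖ := by
  obtain ⟨M, hM⟩ := sum_norm_comp_two_pow_smul_le hρ
  refine ⟨M, fun b N x y ↦ ?_⟩
  have norm_translate (k : ℕ) : ‖𝓕⁻ (compSubConstCLM ℂ ((2 : ℝ) ^ k) b) x‖ = ‖𝓕⁻ b x‖ := by
    rw [fourierInv_coe, fourierInv_coe]
    exact norm_fourierInv_comp_sub_right b _ x
  calc ‖lacunarySum b ρ N (x, y)‖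
      ≤ ∑ k ∈ Finset.range N, ‖𝓕⁻ b x‖ * ‖𝓕⁻ ρ ((2 : ℝ) ^ k • y)‖ := by
        rw [lacunarySum_apply]
        refine (norm_sum_le _ _).trans_eq (Finset.sum_congr rfl fun k _ ↦ ?_)
        rw [norm_mul, norm_translate, fourierInv_schwartzDilation, Units.val_pow_eq_pow_val,
          Units.val_mk0]
    _ = (∑ k ∈ Finset.range N, ‖𝓕⁻ ρ ((2 : ℝ) ^ k • y)‖) * ‖𝓕⁻ b x‖ := by
        rw [← Finset.mul_sum, mul_comm]
    _ ≤ M * ‖𝓕⁻ b x‖ := by gcongr; exact hM N y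

theorem exists_eLpNorm_essSup_lacunarySum_le {ρ : 𝓢(ℝ, ℂ)} (hρ : 𝓕⁻ ρ 0 = 0) :
    ∃ M : ℝ≥0, ∀ (b : 𝓢(ℝ, ℂ)) (N : ℕ),
      eLpNorm (fun x ↦
          (essSup (fun y ↦ (‖lacunarySum b ρ N (x, y)‖₊ : ℝ≥0∞)) volume).toReal) 2 volume ≤
        M * eLpNorm b 2 volume := by
  obtain ⟨M, hM⟩ := exists_norm_lacunarySum_le hρ
  refine ⟨M, fun b N ↦ ?_⟩
  rw [← eLpNorm_fourierInv_eq b.integrable (b.memLp 2), ← fourierInv_coe,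
    ← ENNReal.ofReal_coe_nnreal]
  refine eLpNorm_le_mul_eLpNorm_of_ae_le_mul (.of_forall fun x ↦ ?_) 2
  rw [norm_of_nonneg ENNReal.toReal_nonneg]
  refine ENNReal.toReal_le_of_le_ofReal (by positivity)
    (essSup_le_of_ae_le _ (.of_forall fun y ↦ ?_))
  simp only [← enorm_eq_nnnorm, ← ofReal_norm]
  exact ENNReal.ofReal_le_ofReal (hM b N x y)

theorem one_le_abs_two_pow_sub_two_pow {j k : ℕ} (hjk : j ≠ k) : 1 ≤ |(2 : ℝ) ^ j - 2 ^ k| := by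
  have int_ne : (2 : ℤ) ^ j - 2 ^ k ≠ 0 :=
    sub_ne_zero.2 fun h ↦ hjk (Int.pow_right_injective (by norm_num) h)
  exact_mod_cast Int.one_le_abs int_ne

theorem disjoint_support_comp_sub_two_pow {E : Type*} [Zero E] {b : ℝ → E}
    (hb : ∀ ξ, 1 / 4 ≤ |ξ| → b ξ = 0) {j k : ℕ} (hjk : j ≠ k) :
    Disjoint (Function.support fun ξ ↦ b (ξ - 2 ^ j)) (Function.support fun ξ ↦ b (ξ - 2 ^ k)) := by
  rw [Set.disjoint_left]
  intro ξ hj hk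
  have near_j := lt_of_not_ge (mt (hb _) hj)
  have near_k := lt_of_not_ge (mt (hb _) hk)
  have := abs_sub_le (2 ^ j) ξ (2 ^ k)
  rw [abs_sub_comm (2 ^ j) ξ] at this
  linarith [one_le_abs_two_pow_sub_two_pow hjk]

theorem mul_eLpNorm_le_eLpNorm_mul_partialRiesz {b ρ : 𝓢(ℝ, ℂ)}
    (hb : ∀ ξ, 1 / 4 ≤ |ξ| → b ξ = 0) {c : ℝ≥0}
    (hc : ∀ a ∈ Set.Icc (3 / 4) (5 / 4), ∀ w, |w| ≤ 1 / 6 → c ≤ ‖partialRiesz ρ a w‖)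
    (k : ℕ) {y : ℝ} (hy : |y| * 2 ^ k ≤ 1 / 6) :
    c * eLpNorm b 2 volume ≤ eLpNorm (fun ξ ↦ compSubConstCLM ℂ ((2 : ℝ) ^ k) b ξ *
      partialRiesz (schwartzDilation (Units.mk0 2 two_ne_zero ^ k) ρ) ξ y) 2 volume := by
  have two_pow_pos : (0 : ℝ) < 2 ^ k := by positivity
  have one_le_two_pow : (1 : ℝ) ≤ 2 ^ k := one_le_pow₀ one_le_two
  have translate : eLpNorm (fun ξ ↦ b (ξ - 2 ^ k)) 2 volume = eLpNorm b 2 volume :=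
    eLpNorm_comp_measurePreserving b.continuous.aestronglyMeasurable
      (measurePreserving_sub_right volume (2 ^ k))
  have smul_eq : c * eLpNorm b 2 volume =
      eLpNorm ((c : ℝ) • fun ξ ↦ b (ξ - 2 ^ k)) 2 volume := by
    rw [eLpNorm_const_smul, translate, Real.enorm_eq_ofReal c.coe_nonneg,
      ENNReal.ofReal_coe_nnreal]
  rw [smul_eq]
  refine eLpNorm_mono fun ξ ↦ ?_
  rw [Pi.smul_apply, norm_smul, norm_of_nonneg c.coe_nonneg, compSubConstCLM_apply, norm_mul,
    mul_comm (c : ℝ), partialRiesz_schwartzDilation, Units.val_pow_eq_pow_val, Units.val_mk0]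
  rcases le_or_gt (1 / 4) |ξ - 2 ^ k| with far | near
  · simp [hb _ far]
  · obtain ⟨lower, upper⟩ := abs_lt.1 near
    have freq_mem : ((2 : ℝ) ^ k)⁻¹ * ξ ∈ Set.Icc (3 / 4) (5 / 4) := by
      rw [inv_mul_eq_div, Set.mem_Icc, le_div_iff₀ two_pow_pos, div_le_iff₀ two_pow_pos]
      constructor <;> linarith
    have abs_le : |2 ^ k * y| ≤ 1 / 6 := by
      rwa [abs_mul, abs_of_pos two_pow_pos, mul_comm]
    gcongr
    exact hc _ freq_mem _ abs_le

theorem mul_sq_le_eLpNorm_doubleRiesz_lacunarySum_sq {b ρ : 𝓢(ℝ, ℂ)}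
    (hb : ∀ ξ, 1 / 4 ≤ |ξ| → b ξ = 0) {c : ℝ≥0}
    (hc : ∀ a ∈ Set.Icc (3 / 4) (5 / 4), ∀ w, |w| ≤ 1 / 6 → c ≤ ‖partialRiesz ρ a w‖)
    {N : ℕ} {y : ℝ} (hy : |y| ≤ 1 / 6 / 2 ^ N) :
    N * (c * eLpNorm b 2 volume) ^ 2 ≤
      eLpNorm (fun x ↦ doubleRiesz (fun s t ↦ lacunarySum b ρ N (s, t)) x y) 2 volume ^ 2 := by
  let u (k : ℕ) : 𝓢(ℝ, ℂ) := compSubConstCLM ℂ ((2 : ℝ) ^ k) b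
  let v (k : ℕ) : 𝓢(ℝ, ℂ) := schwartzDilation (Units.mk0 2 two_ne_zero ^ k) ρ
  have hy_le (k : ℕ) (hk : k ∈ Finset.range N) : |y| * 2 ^ k ≤ 1 / 6 := by
    rw [← le_div_iff₀ (by positivity)]
    refine hy.trans ?_
    gcongr
    exacts [one_le_two, (Finset.mem_range.1 hk).le]
  have disjoint : (Finset.range N : Set ℕ).Pairwise fun j k ↦
      Disjoint (Function.support fun ξ ↦ u j ξ * partialRiesz (v j) ξ y)
        (Function.support fun ξ ↦ u k ξ * partialRiesz (v k) ξ y) := fun j _ k _ hjk ↦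
    (disjoint_support_comp_sub_two_pow hb hjk).mono
      (Function.support_mul_subset_left _ _) (Function.support_mul_subset_left _ _)
  have orthogonality := eLpNorm_sum_pow_of_pairwise_disjoint_support (p := 2) (μ := volume)
    (fun k _ ↦ (memLp_mul_partialRiesz (u k) (v k) y 2).aestronglyMeasurable) disjoint two_ne_zero
  simp only [NNReal.coe_ofNat, ENNReal.coe_ofNat, ENNReal.rpow_ofNat] at orthogonality
  calc N * (c * eLpNorm b 2 volume) ^ 2
      = ∑ _k ∈ Finset.range N, (c * eLpNorm b 2 volume) ^ 2 := by simp
    _ ≤ ∑ k ∈ Finset.range N, eLpNorm (fun ξ ↦ u k ξ * partialRiesz (v k) ξ y) 2 volume ^ 2 := by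
        gcongr with k hk
        exact mul_eLpNorm_le_eLpNorm_mul_partialRiesz hb hc k (hy_le k hk)
    _ = eLpNorm (fun x ↦ doubleRiesz (fun s t ↦ lacunarySum b ρ N (s, t)) x y) 2 volume ^ 2 := by
        simp only [lacunarySum_apply]
        rw [← orthogonality, eLpNorm_doubleRiesz_sum_mul]

end LacunarySum

section Profiles

open scoped NNReal

theorem exists_schwartz_ne_zero_eq_zero_of_le_norm {E : Type*} [NormedAddCommGroup E]
    [NormedSpace ℝ E] [FiniteDimensional ℝ E] {r : ℝ} (hr : 0 < r) :
    ∃ b : 𝓢(E, ℂ), b ≠ 0 ∧ ∀ x, r ≤ ‖x‖ → b x = 0 := by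
  let β : ContDiffBump (0 : E) := ⟨r / 2, r, by positivity, by linarith⟩
  let b : 𝓢(E, ℂ) := HasCompactSupport.toSchwartzMap (f := fun x ↦ (β x : ℂ))
    (β.hasCompactSupport.comp_left Complex.ofReal_zero)
    (Complex.ofRealCLM.contDiff.comp β.contDiff)
  have b_apply (x : E) : b x = (β x : ℂ) := rfl
  refine ⟨b, fun b_eq_zero ↦ ?_, fun x hx ↦ ?_⟩
  · have b_zero : b 0 = 1 := by
      rw [b_apply, β.one_of_mem_closedBall (Metric.mem_closedBall_self β.rIn_pos.le),
        Complex.ofReal_one]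
    simp [b_eq_zero] at b_zero
  · rw [b_apply, β.zero_of_le_dist (by rwa [dist_zero_right]), Complex.ofReal_zero]

theorem exists_schwartz_le_norm_partialRiesz :
    ∃ ρ : 𝓢(ℝ, ℂ), 𝓕⁻ ρ 0 = 0 ∧ ∃ c : ℝ≥0, c ≠ 0 ∧
      ∀ a ∈ Set.Icc (3 / 4) (5 / 4), ∀ w, |w| ≤ 1 / 6 → c ≤ ‖partialRiesz ρ a w‖ := by
  let χ : ContDiffBump (0 : ℝ) := ⟨1 / 2, 1, by norm_num, by norm_num⟩
  have χ_eq_zero (η : ℝ) (hη : 1 ≤ |η|) : χ η = 0 := χ.zero_of_le_dist (by simpa using hη)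
  let ρ : 𝓢(ℝ, ℂ) := HasCompactSupport.toSchwartzMap (f := fun η ↦ ((η * χ η : ℝ) : ℂ))
    (χ.hasCompactSupport.mul_left.comp_left Complex.ofReal_zero)
    (Complex.ofRealCLM.contDiff.comp (contDiff_id.mul χ.contDiff))
  have ρ_odd : Function.Odd ρ := fun η ↦ by
    change ((-η * χ (-η) : ℝ) : ℂ) = -((η * χ η : ℝ) : ℂ)
    rw [χ.neg, neg_mul, Complex.ofReal_neg]
  have integral_pos : 0 < ∫ η, η ^ 2 * χ η / 8 := by
    refine Continuous.integral_pos_of_hasCompactSupport_nonneg_nonzero (x := 1 / 2)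
      (((continuous_pow 2).mul χ.continuous).div_const 8) ?_ (fun η ↦ ?_) ?_
    · simp only [mul_div_right_comm]
      exact χ.hasCompactSupport.mul_left
    · have := χ.nonneg (x := η)
      positivity
    · have χ_half : χ (1 / 2) = 1 := χ.one_of_mem_closedBall (by norm_num [χ])
      norm_num [χ_half]
  refine ⟨ρ, ?_, (∫ η, η ^ 2 * χ η / 8).toNNReal, (Real.toNNReal_pos.2 integral_pos).ne',
    fun a ha w hw ↦ ?_⟩
  · rw [fourierInv_coe, fourierInv_apply_zero_of_odd ρ_odd]
  · rw [Real.coe_toNNReal _ integral_pos.le]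
    have integrable_mul : Integrable fun η ↦ η * χ η :=
      (continuous_id.mul χ.continuous).integrable_of_hasCompactSupport χ.hasCompactSupport.mul_left
    exact (integral_div_eight_le_re_partialRiesz integrable_mul (fun _ ↦ χ.nonneg) χ_eq_zero
      ha hw).trans (Complex.re_le_norm _)

end Profiles

/-- There is no constant `C` such that
`‖‖R₁₂f(x,y)‖_{L²_x}‖_{L^∞_y} ≤ C ‖‖f(x,y)‖_{L^∞_y}‖_{L²_x}` for all Schwartz `f` on `ℝ²`. -/
theorem no_mixed_norm_estimate_L2 :
    ¬ ∃ C : ℝ, ∀ f : 𝓢(ℝ × ℝ, ℂ),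
      essSup (fun y : ℝ =>
          eLpNorm (fun x : ℝ => doubleRiesz (fun s t => f (s, t)) x y) 2 volume) volume ≤
        ENNReal.ofReal C *
          eLpNorm (fun x : ℝ =>
            (essSup (fun y : ℝ => (‖f (x, y)‖₊ : ℝ≥0∞)) volume).toReal) 2 volume := by
  rintro ⟨C, hC⟩
  obtain ⟨b, b_ne_zero, hb⟩ := exists_schwartz_ne_zero_eq_zero_of_le_norm (E := ℝ) (r := 1 / 4)
    (by norm_num)
  obtain ⟨ρ, hρ, c, c_ne_zero, hc⟩ := exists_schwartz_le_norm_partialRiesz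
  obtain ⟨M, hM⟩ := exists_eLpNorm_essSup_lacunarySum_le hρ
  have lower_ne_zero : (c * eLpNorm b 2 volume) ^ 2 ≠ 0 :=
    pow_ne_zero 2 (mul_ne_zero (by simpa) (eLpNorm_schwartz_ne_zero b_ne_zero two_ne_zero))
  have upper_ne_top : (ENNReal.ofReal C * (M * eLpNorm b 2 volume)) ^ 2 ≠ ∞ := by
    finiteness [(b.memLp 2 volume).eLpNorm_ne_top]
  obtain ⟨N, hN⟩ := ENNReal.exists_nat_mul_gt lower_ne_zero upper_ne_top
  obtain ⟨y, hy, y_le⟩ := exists_mem_le_essSup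
    (Metric.measure_closedBall_pos volume (0 : ℝ) (r := 1 / 6 / 2 ^ N) (by positivity)).ne'
    fun y ↦ eLpNorm (fun x ↦ doubleRiesz (fun s t ↦ lacunarySum b ρ N (s, t)) x y) 2 volume
  refine hN.not_ge ?_
  calc N * (c * eLpNorm b 2 volume) ^ 2
      ≤ eLpNorm (fun x ↦ doubleRiesz (fun s t ↦ lacunarySum b ρ N (s, t)) x y) 2 volume ^ 2 :=
        mul_sq_le_eLpNorm_doubleRiesz_lacunarySum_sq hb hc (mem_closedBall_zero_iff.1 hy)
    _ ≤ (ENNReal.ofReal C * (M * eLpNorm b 2 volume)) ^ 2 := by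
        gcongr
        exact y_le.trans ((hC _).trans (mul_le_mul_right (hM b N) _))
end

section
/- For every p ≥ 2 there is no constant C_p such that ‖‖R₁₂ f(x,y)‖_{L^p_x}‖_{L^∞_y} ≤ C_p ‖‖f(x,y)‖_{L^∞_y}‖_{L^p_x} for all Schwartz functions f on ℝ². -/
open MeasureTheory FourierTransform Real SchwartzMap
open scoped ENNReal

/-!
Since `Δ` cancels the denominator of the symbol, `R₁₂ (Δ u) = ∂₁∂₂ u`. Take
`u_N (s, t) = ∑_{k < N} χ(s) exp(i l_k s) l_k⁻² φ(l_k t)` with `l_k = 2π 2^k`, a cutoff `χ` equal to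
`1` near `[0, 1]`, and a compactly supported profile `φ` with `φ(t) = t` near `0`. The functions
`φ` and `φ''` are Lipschitz, compactly supported and vanish at `0`, so only boundedly much of
`∑_k |φ(2^k t)| + |φ''(2^k t)|` survives at each `t`, and `Δ u_N` is bounded by a compactly
supported function of `s` independent of `N`. On the other hand `∂₁∂₂ u_N (x, y)`, for `x ∈ [0, 1]`
and `y` near `0`, is the lacunary sum `i ∑_{k < N} exp(2πi 2^k x)`, whose `L²` norm on the period,
and hence every `Lᵖ` norm with `p ≥ 2`, is at least `√N`.
-/

open Filter WithLp
open scoped Topology ContDiff LineDeriv Laplacian NNReal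

section IteratedFourier

variable {U V E : Type*}
  [NormedAddCommGroup U] [InnerProductSpace ℝ U] [FiniteDimensional ℝ U]
  [MeasurableSpace U] [BorelSpace U]
  [NormedAddCommGroup V] [InnerProductSpace ℝ V] [FiniteDimensional ℝ V]
  [MeasurableSpace V] [BorelSpace V]
  [NormedAddCommGroup E] [NormedSpace ℂ E]

lemma fourier_fourier_toLp {f : WithLp 2 (U × V) → E} (hf : Integrable f) (ξ : U) (η : V) :
    𝓕 (fun u : U => 𝓕 (fun v : V => f (toLp 2 (u, v))) η) ξ = 𝓕 f (toLp 2 (ξ, η)) := by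
  have hmp := volume_preserving_toLp U V
  have hemb := (MeasurableEquiv.toLp 2 (U × V)).measurableEmbedding
  have hint : Integrable fun w : U × V =>
      𝐞 (-inner ℝ (toLp 2 w) (toLp 2 (ξ, η))) • f (toLp 2 w) :=
    (hmp.integrable_comp_emb hemb).2 ((Real.fourierIntegral_convergent_iff _).2 hf)
  rw [Real.fourier_eq, Real.fourier_eq, ← hmp.integral_comp hemb, Measure.volume_eq_prod,
    integral_prod _ hint]
  refine integral_congr_ae (.of_forall fun u => ?_)
  simp only [Real.fourier_eq, Circle.smul_def, ← integral_smul, smul_smul,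
    prod_inner_apply, neg_add, AddChar.map_add_eq_mul, Circle.coe_mul]

lemma fourierInv_fourierInv_toLp {f : WithLp 2 (U × V) → E} (hf : Integrable f) (u : U) (v : V) :
    𝓕⁻ (fun ξ : U => 𝓕⁻ (fun η : V => f (toLp 2 (ξ, η))) v) u = 𝓕⁻ f (toLp 2 (u, v)) := by
  simp only [Real.fourierInv_eq_fourier_neg, ← toLp_neg]
  exact fourier_fourier_toLp hf (-u) (-v)

end IteratedFourier

lemma fourier_lineDerivOp_apply {V E : Type*} [NormedAddCommGroup V] [InnerProductSpace ℝ V]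
    [FiniteDimensional ℝ V] [MeasurableSpace V] [BorelSpace V] [NormedAddCommGroup E]
    [NormedSpace ℂ E] (f : 𝓢(V, E)) (m ξ : V) :
    𝓕 (∂_{m} f) ξ = (2 * π * Complex.I * (inner ℝ ξ m : ℝ)) • 𝓕 f ξ := by
  have : (inner ℝ · m).HasTemperateGrowth := by fun_prop
  simp [SchwartzMap.fourier_lineDerivOp_eq, this, mul_smul]

section Plane

variable (u : 𝓢(WithLp 2 (ℝ × ℝ), ℂ)) (x y : ℝ)

lemma laplacian_eq_lineDerivOp_add :
    Δ u = ∂_{toLp 2 ((1 : ℝ), (0 : ℝ))} (∂_{toLp 2 ((1 : ℝ), (0 : ℝ))} u) +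
      ∂_{toLp 2 ((0 : ℝ), (1 : ℝ))} (∂_{toLp 2 ((0 : ℝ), (1 : ℝ))} u) := by
  let b := OrthonormalBasis.singleton Unit ℝ
  simp [SchwartzMap.laplacian_eq_sum (b.prod b), b]

lemma lineDerivOp_fst_apply :
    ∂_{toLp 2 ((1 : ℝ), (0 : ℝ))} u (toLp 2 (x, y)) = deriv (fun s => u (toLp 2 (s, y))) x := by
  simp only [SchwartzMap.lineDerivOp_apply, lineDeriv, ← toLp_smul, ← toLp_add, Prod.smul_mk,
    smul_eq_mul, mul_one, mul_zero, Prod.mk_add_mk, add_zero]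
  simp [deriv_comp_const_add (f := fun s => u (toLp 2 (s, y)))]

lemma lineDerivOp_snd_apply :
    ∂_{toLp 2 ((0 : ℝ), (1 : ℝ))} u (toLp 2 (x, y)) = deriv (fun t => u (toLp 2 (x, t))) y := by
  simp only [SchwartzMap.lineDerivOp_apply, lineDeriv, ← toLp_smul, ← toLp_add, Prod.smul_mk,
    smul_eq_mul, mul_one, mul_zero, Prod.mk_add_mk, add_zero]
  simp [deriv_comp_const_add (f := fun s => u (toLp 2 (x, s)))]

lemma symbol_mul_fourier_laplacian (ξ₁ ξ₂ : ℝ) :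
    ((ξ₁ * ξ₂ / (ξ₁ ^ 2 + ξ₂ ^ 2) : ℝ) : ℂ) * 𝓕 (Δ u) (toLp 2 (ξ₁, ξ₂)) =
      𝓕 (∂_{toLp 2 ((1 : ℝ), (0 : ℝ))} (∂_{toLp 2 ((0 : ℝ), (1 : ℝ))} u)) (toLp 2 (ξ₁, ξ₂)) := by
  rw [laplacian_eq_lineDerivOp_add, FourierTransform.fourier_add]
  simp only [add_apply, fourier_lineDerivOp_apply, prod_inner_apply, smul_eq_mul]
  -- At the origin the symbol is `0 / 0 = 0`, and both sides vanish.
  rcases eq_or_ne ((ξ₁ : ℂ) ^ 2 + ξ₂ ^ 2) 0 with h | h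
  · obtain ⟨rfl, rfl⟩ : ξ₁ = 0 ∧ ξ₂ = 0 := by
      have : ξ₁ ^ 2 + ξ₂ ^ 2 = 0 := mod_cast h
      constructor <;> nlinarith
    simp
  · simp only [Complex.ofReal_div, Complex.ofReal_mul, Complex.ofReal_add, Complex.ofReal_pow,
      RCLike.inner_apply, ringHom_apply, one_mul, zero_mul, add_zero, zero_add]
    field_simp

lemma doubleRiesz_laplacian :
    doubleRiesz (fun s t => (Δ u : 𝓢(WithLp 2 (ℝ × ℝ), ℂ)) (toLp 2 (s, t))) x y =
      deriv (fun s => deriv (fun t => u (toLp 2 (s, t))) y) x := by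
  simp only [doubleRiesz, fourier_fourier_toLp (Δ u).integrable, ← SchwartzMap.fourier_coe,
    symbol_mul_fourier_laplacian]
  rw [fourierInv_fourierInv_toLp (SchwartzMap.integrable _), ← SchwartzMap.fourierInv_coe,
    FourierTransform.fourierInv_fourier_eq, lineDerivOp_fst_apply]
  simp only [lineDerivOp_snd_apply]

end Plane

lemma exists_schwartzMap_eq_mul {a b : ℝ → ℂ} (ha : ContDiff ℝ ∞ a) (hac : HasCompactSupport a)
    (hb : ContDiff ℝ ∞ b) (hbc : HasCompactSupport b) :
    ∃ u : 𝓢(WithLp 2 (ℝ × ℝ), ℂ), ∀ s t, u (toLp 2 (s, t)) = a s * b t := by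
  let e := prodContinuousLinearEquiv 2 ℝ ℝ ℝ
  have hsmooth : ContDiff ℝ ∞ fun w : ℝ × ℝ => a w.1 * b w.2 :=
    (ha.comp contDiff_fst).mul (hb.comp contDiff_snd)
  have hsupp : HasCompactSupport fun w : ℝ × ℝ => a w.1 * b w.2 := by
    refine .intro (hac.prod hbc) fun w hw => ?_
    rcases not_and_or.1 hw with h | h <;> simp [image_eq_zero_of_notMem_tsupport h]
  exact ⟨(hsupp.comp_homeomorph e.toHomeomorph).toSchwartzMap (hsmooth.comp e.contDiff),
    fun s t => rfl⟩

lemma exists_schwartzMap_doubleRiesz_eq_sum {ι : Type*} (S : Finset ι) {a b : ι → ℝ → ℂ}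
    (ha : ∀ i, ContDiff ℝ ∞ (a i)) (hac : ∀ i, HasCompactSupport (a i))
    (hb : ∀ i, ContDiff ℝ ∞ (b i)) (hbc : ∀ i, HasCompactSupport (b i)) :
    ∃ f : 𝓢(ℝ × ℝ, ℂ),
      (∀ s t, f (s, t) = ∑ i ∈ S, (deriv (deriv (a i)) s * b i t + a i s * deriv (deriv (b i)) t)) ∧
      ∀ x y, doubleRiesz (fun s t => f (s, t)) x y = ∑ i ∈ S, deriv (a i) x * deriv (b i) y := by
  choose u hu using fun i => exists_schwartzMap_eq_mul (ha i) (hac i) (hb i) (hbc i)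
  let e := (prodContinuousLinearEquiv 2 ℝ ℝ ℝ).symm
  refine ⟨SchwartzMap.compCLMOfContinuousLinearEquiv ℝ e (Δ (∑ i ∈ S, u i)), fun s t => ?_,
    fun x y => (doubleRiesz_laplacian _ x y).trans ?_⟩
  · change (Δ (∑ i ∈ S, u i) : 𝓢(WithLp 2 (ℝ × ℝ), ℂ)) (toLp 2 (s, t)) = _
    simp [laplacian_eq_lineDerivOp_add, LineDeriv.lineDerivOp_sum, lineDerivOp_fst_apply,
      lineDerivOp_snd_apply, hu, Finset.sum_add_distrib]
  · have hda i : Differentiable ℝ (a i) := (ha i).differentiable (by simp)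
    have hdb i : Differentiable ℝ (b i) := (hb i).differentiable (by simp)
    simp only [sum_apply, hu]
    have deriv_snd s : deriv (fun t => ∑ i ∈ S, a i s * b i t) y =
        ∑ i ∈ S, a i s * deriv (b i) y := by
      rw [deriv_fun_sum fun i _ => (hdb i y).const_mul _]
      simp
    simp only [deriv_snd]
    rw [deriv_fun_sum fun i _ => (hda i x).mul_const _]
    simp

section WavePacket

/-- The cutoff `χ` modulated to frequency `l`, as a function of the first variable. -/
noncomputable def modulate (χ : ℝ → ℂ) (l s : ℝ) : ℂ := χ s * Complex.exp (l * Complex.I * s)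

/-- The profile `φ` dilated to scale `1 / l`, as a function of the second variable. The factor
`l⁻²` makes two derivatives of it, or its product with two derivatives of `modulate χ l`, of
order one. -/
noncomputable def dilate (φ : ℝ → ℂ) (l t : ℝ) : ℂ := φ (l * t) / l ^ 2

/-- A pointwise bound, uniform in the frequency `l ≥ 1`, for `l⁻²` times the second derivative of
`modulate χ l`. -/
noncomputable def envelope (χ : ℝ → ℂ) (s : ℝ) : ℝ :=
  ‖deriv (deriv χ) s‖ + 2 * ‖deriv χ s‖ + ‖χ s‖

variable {χ φ : ℝ → ℂ} {l : ℝ}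

lemma envelope_nonneg (χ : ℝ → ℂ) (s : ℝ) : 0 ≤ envelope χ s := by
  unfold envelope
  positivity

lemma continuous_envelope (hχ : ContDiff ℝ 2 χ) : Continuous (envelope χ) := by
  have h₁ : Continuous (deriv χ) := hχ.continuous_deriv (by simp)
  have h₂ : Continuous (deriv (deriv χ)) := hχ.deriv'.continuous_deriv le_rfl
  exact (h₂.norm.add (h₁.norm.const_mul 2)).add hχ.continuous.norm

lemma hasCompactSupport_envelope (hχ : HasCompactSupport χ) : HasCompactSupport (envelope χ) :=
  (hχ.deriv.deriv.norm.add hχ.deriv.norm.mul_left).add hχ.norm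

lemma contDiff_modulate {n : ℕ∞ω} (hχ : ContDiff ℝ n χ) : ContDiff ℝ n (modulate χ l) :=
  hχ.mul (contDiff_const.mul Complex.ofRealCLM.contDiff).cexp

lemma hasCompactSupport_modulate (hχ : HasCompactSupport χ) :
    HasCompactSupport (modulate χ l) :=
  hχ.mul_right

lemma norm_modulate (s : ℝ) : ‖modulate χ l s‖ = ‖χ s‖ := by
  simp [modulate, Complex.norm_exp]

lemma deriv_modulate (hχ : Differentiable ℝ χ) :
    deriv (modulate χ l) = modulate (fun s => deriv χ s + l * Complex.I * χ s) l := by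
  ext s
  have hexp : HasDerivAt (fun s : ℝ => Complex.exp (l * Complex.I * s))
      (Complex.exp (l * Complex.I * s) * (l * Complex.I * 1)) s :=
    ((Complex.ofRealCLM.hasDerivAt (x := s)).const_mul (l * Complex.I)).cexp
  refine ((hχ s).hasDerivAt.mul hexp).deriv.trans ?_
  simp only [modulate]
  ring

lemma norm_deriv_deriv_modulate_le (hχ : ContDiff ℝ 2 χ) (hl : 1 ≤ l) (s : ℝ) :
    ‖deriv (deriv (modulate χ l)) s‖ ≤ l ^ 2 * envelope χ s := by
  have hχ₁ : Differentiable ℝ χ := hχ.differentiable (by simp)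
  have hχ₂ : Differentiable ℝ (deriv χ) := hχ.differentiable_deriv_two
  have key : deriv (fun s => deriv χ s + l * Complex.I * χ s) s + l * Complex.I *
      (deriv χ s + l * Complex.I * χ s) =
        deriv (deriv χ) s + 2 * l * Complex.I * deriv χ s - l ^ 2 * χ s := by
    rw [deriv_fun_add (hχ₂ s) ((hχ₁ s).const_mul _), deriv_const_mul _ (hχ₁ s)]
    linear_combination l ^ 2 * χ s * Complex.I_sq
  rw [deriv_modulate hχ₁, deriv_modulate (by fun_prop), norm_modulate, key, envelope]
  calc ‖deriv (deriv χ) s + 2 * l * Complex.I * deriv χ s - l ^ 2 * χ s‖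
      ≤ ‖deriv (deriv χ) s‖ + ‖2 * l * Complex.I * deriv χ s‖ + ‖l ^ 2 * χ s‖ :=
        norm_sub_le_of_le (norm_add_le _ _) le_rfl
    _ = 1 * ‖deriv (deriv χ) s‖ + l * (2 * ‖deriv χ s‖) + l ^ 2 * ‖χ s‖ := by
        simp [abs_of_pos (one_pos.trans_le hl)]
        ring
    _ ≤ l ^ 2 * ‖deriv (deriv χ) s‖ + l ^ 2 * (2 * ‖deriv χ s‖) + l ^ 2 * ‖χ s‖ := by
        gcongr <;> nlinarith
    _ = _ := by ring

lemma contDiff_dilate {n : ℕ∞ω} (hφ : ContDiff ℝ n φ) : ContDiff ℝ n (dilate φ l) :=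
  (hφ.comp (contDiff_const.mul contDiff_id)).div_const _

lemma hasCompactSupport_dilate (hφ : HasCompactSupport φ) (hl : l ≠ 0) :
    HasCompactSupport (dilate φ l) :=
  (hφ.comp_homeomorph (Homeomorph.mulLeft₀ l hl)).mul_right

lemma deriv_dilate (φ : ℝ → ℂ) (l t : ℝ) : deriv (dilate φ l) t = deriv φ (l * t) / l := by
  change deriv (fun t => φ (l * t) / l ^ 2) t = _
  rw [deriv_div_const, deriv_comp_mul_left, Complex.real_smul]
  field_simp

lemma deriv_deriv_dilate (hl : l ≠ 0) (t : ℝ) :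
    deriv (deriv (dilate φ l)) t = deriv (deriv φ) (l * t) := by
  have hlC : (l : ℂ) ≠ 0 := Complex.ofReal_ne_zero.2 hl
  rw [funext (deriv_dilate φ l), deriv_div_const, deriv_comp_mul_left, Complex.real_smul]
  field_simp

lemma norm_deriv_deriv_modulate_mul_dilate_add_le (hχ : ContDiff ℝ 2 χ) (hl : 1 ≤ l) (s t : ℝ) :
    ‖deriv (deriv (modulate χ l)) s * dilate φ l t +
        modulate χ l s * deriv (deriv (dilate φ l)) t‖ ≤
      envelope χ s * (‖φ (l * t)‖ + ‖deriv (deriv φ) (l * t)‖) := by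
  have hl₀ : 0 < l := one_pos.trans_le hl
  have hχs : ‖χ s‖ ≤ envelope χ s := by
    unfold envelope
    linarith [norm_nonneg (deriv (deriv χ) s), norm_nonneg (deriv χ s)]
  calc _ ≤ ‖deriv (deriv (modulate χ l)) s‖ * ‖dilate φ l t‖ +
          ‖modulate χ l s‖ * ‖deriv (deriv (dilate φ l)) t‖ := by
        simp only [← norm_mul]
        exact norm_add_le _ _
    _ ≤ l ^ 2 * envelope χ s * (‖φ (l * t)‖ / l ^ 2) +
          envelope χ s * ‖deriv (deriv φ) (l * t)‖ := by
        rw [norm_modulate, deriv_deriv_dilate hl₀.ne']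
        gcongr
        · exact mul_nonneg (sq_nonneg l) (envelope_nonneg χ s)
        · exact norm_deriv_deriv_modulate_le hχ hl s
        · simp [dilate]
    _ = _ := by field_simp

lemma deriv_modulate_mul_deriv_dilate {x y : ℝ} (hχ : Differentiable ℝ χ) (hl : l ≠ 0)
    (hχx : χ =ᶠ[𝓝 x] 1) (hφy : deriv φ (l * y) = 1) :
    deriv (modulate χ l) x * deriv (dilate φ l) y =
      Complex.I * Complex.exp (l * Complex.I * x) := by
  have hlC : (l : ℂ) ≠ 0 := Complex.ofReal_ne_zero.2 hl
  have hχ₀ : χ x = 1 := hχx.eq_of_nhds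
  have hχ₁ : deriv χ x = 0 := by simpa [Pi.one_def] using hχx.deriv_eq
  rw [deriv_modulate hχ, deriv_dilate, modulate, hχ₀, hχ₁, hφy]
  field_simp
  ring

lemma exists_schwartzMap_doubleRiesz_eq_sum_exp {ι : Type*} (S : Finset ι) {l : ι → ℝ}
    (hl : ∀ i, 1 ≤ l i) (hχ : ContDiff ℝ ∞ χ) (hχc : HasCompactSupport χ)
    (hφ : ContDiff ℝ ∞ φ) (hφc : HasCompactSupport φ) :
    ∃ f : 𝓢(ℝ × ℝ, ℂ),
      (∀ s t, ‖f (s, t)‖ ≤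
        envelope χ s * ∑ i ∈ S, (‖φ (l i * t)‖ + ‖deriv (deriv φ) (l i * t)‖)) ∧
      ∀ x y, χ =ᶠ[𝓝 x] 1 → (∀ i ∈ S, deriv φ (l i * y) = 1) →
        doubleRiesz (fun s t => f (s, t)) x y =
          ∑ i ∈ S, Complex.I * Complex.exp (l i * Complex.I * x) := by
  have hl₀ (i : ι) : l i ≠ 0 := (one_pos.trans_le (hl i)).ne'
  obtain ⟨f, hf, hRf⟩ := exists_schwartzMap_doubleRiesz_eq_sum S
    (fun i => contDiff_modulate (l := l i) hχ) (fun _ => hasCompactSupport_modulate hχc)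
    (fun i => contDiff_dilate (l := l i) hφ) (fun i => hasCompactSupport_dilate hφc (hl₀ i))
  refine ⟨f, fun s t => ?_, fun x y hχx hφy => ?_⟩
  · rw [hf, Finset.mul_sum]
    exact norm_sum_le_of_le _ fun i _ =>
      norm_deriv_deriv_modulate_mul_dilate_add_le (contDiff_infty.1 hχ 2) (hl i) s t
  · rw [hRf]
    exact Finset.sum_congr rfl fun i hi => deriv_modulate_mul_deriv_dilate
      (hχ.differentiable (by simp)) (hl₀ i) hχx (hφy i hi)

end WavePacket

section Dyadic

variable {E F : Type*} [NormedAddCommGroup E] [NormedSpace ℝ E] [NormedAddCommGroup F]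

lemma sum_norm_two_pow_smul_le {g : E → F} {M : ℝ≥0} {R : ℝ} (hg : LipschitzWith M g)
    (h0 : g 0 = 0) (hR : 0 ≤ R) (hgR : ∀ x, R < ‖x‖ → g x = 0) (N : ℕ) (x : E) :
    ∑ k ∈ Finset.range N, ‖g ((2 : ℝ) ^ k • x)‖ ≤ 2 * M * R := by
  induction N with
  | zero => simpa using by positivity
  | succ N ih =>
    rcases lt_or_ge R ‖(2 : ℝ) ^ N • x‖ with h | h
    · simpa [Finset.sum_range_succ, hgR _ h] using ih
    · have hx : 2 ^ N * ‖x‖ ≤ R := by simpa [norm_smul] using h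
      have hgeom : ∑ k ∈ Finset.range (N + 1), (2 : ℝ) ^ k ≤ 2 * 2 ^ N := by
        rw [geom_sum_eq (by norm_num), pow_succ]
        linarith
      calc ∑ k ∈ Finset.range (N + 1), ‖g ((2 : ℝ) ^ k • x)‖
          ≤ ∑ k ∈ Finset.range (N + 1), M * (2 ^ k * ‖x‖) := by
            gcongr with k
            simpa [h0, norm_smul] using hg.norm_sub_le ((2 : ℝ) ^ k • x) 0
        _ = M * ‖x‖ * ∑ k ∈ Finset.range (N + 1), 2 ^ k := by
            rw [Finset.mul_sum]
            exact Finset.sum_congr rfl fun k _ => by ring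
        _ ≤ M * ‖x‖ * (2 * 2 ^ N) := by gcongr
        _ = 2 * M * (2 ^ N * ‖x‖) := by ring
        _ ≤ 2 * M * R := by gcongr

lemma exists_sum_norm_two_pow_smul_le [NormedSpace ℝ F] {g : E → F} (hg : ContDiff ℝ 1 g)
    (hgc : HasCompactSupport g) (h0 : g 0 = 0) :
    ∃ C : ℝ, ∀ (N : ℕ) (x : E), ∑ k ∈ Finset.range N, ‖g ((2 : ℝ) ^ k • x)‖ ≤ C := by
  obtain ⟨M, hM⟩ := hg.lipschitzWith_of_hasCompactSupport hgc one_ne_zero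
  obtain ⟨R, hR, hgR⟩ := hgc.exists_pos_le_norm
  exact ⟨2 * M * R, sum_norm_two_pow_smul_le hM h0 hR.le fun x hx => hgR x hx.le⟩

lemma exists_sum_norm_add_norm_deriv_deriv_le {F : Type*} [NormedAddCommGroup F] [NormedSpace ℝ F]
    {φ : ℝ → F} (hφ : ContDiff ℝ 3 φ) (hφc : HasCompactSupport φ) (h₀ : φ 0 = 0)
    (h₂ : deriv (deriv φ) 0 = 0) :
    ∃ C : ℝ, ∀ (N : ℕ) (t : ℝ), ∑ k ∈ Finset.range N,
      (‖φ (2 ^ k * t)‖ + ‖deriv (deriv φ) (2 ^ k * t)‖) ≤ C := by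
  have hφ'' : ContDiff ℝ 1 (deriv (deriv φ)) := by
    have : ContDiff ℝ (1 + 1 + 1) φ := hφ.of_le (by norm_num)
    exact this.deriv'.deriv'
  obtain ⟨A, hA⟩ := exists_sum_norm_two_pow_smul_le (hφ.of_le (by norm_num)) hφc h₀
  obtain ⟨B, hB⟩ := exists_sum_norm_two_pow_smul_le hφ'' hφc.deriv.deriv h₂
  refine ⟨A + B, fun N t => ?_⟩
  rw [Finset.sum_add_distrib]
  exact add_le_add (hA N t) (hB N t)

end Dyadic

lemma exists_contDiff_hasCompactSupport_eventuallyEq_one {E : Type*} [NormedAddCommGroup E]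
    [NormedSpace ℝ E] [FiniteDimensional ℝ E] (x₀ : E) {R : ℝ} (hR : 0 < R) :
    ∃ χ : E → ℂ, ContDiff ℝ ∞ χ ∧ HasCompactSupport χ ∧ ∀ x ∈ Metric.ball x₀ R, χ =ᶠ[𝓝 x] 1 := by
  let β : ContDiffBump x₀ := ⟨R, R + 1, hR, lt_add_one R⟩
  refine ⟨fun x => (β x : ℂ), Complex.ofRealCLM.contDiff.comp β.contDiff,
    β.hasCompactSupport.comp_left Complex.ofReal_zero, fun x hx => ?_⟩
  filter_upwards [β.eventuallyEq_one_of_mem_ball hx] with y hy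
  simp [hy]

lemma exists_contDiff_hasCompactSupport_deriv_eventuallyEq_one :
    ∃ φ : ℝ → ℂ, ContDiff ℝ ∞ φ ∧ HasCompactSupport φ ∧ φ 0 = 0 ∧ deriv φ =ᶠ[𝓝 0] 1 := by
  obtain ⟨χ, hχ, hχc, hχ₁⟩ := exists_contDiff_hasCompactSupport_eventuallyEq_one (0 : ℝ) one_pos
  have h : (fun t : ℝ => t * χ t) =ᶠ[𝓝 0] Complex.ofReal := by
    filter_upwards [hχ₁ 0 (by simp)] with t ht
    simp [ht]
  exact ⟨fun t => t * χ t, Complex.ofRealCLM.contDiff.mul hχ, hχc.mul_left, by simp,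
    h.deriv.trans (.of_eq (funext fun t => Complex.ofRealCLM.hasDerivAt.deriv))⟩

lemma exists_schwartzMap_doubleRiesz_eq_lacunary :
    ∃ H : ℝ → ℝ, Continuous H ∧ HasCompactSupport H ∧ ∀ N : ℕ, ∃ f : 𝓢(ℝ × ℝ, ℂ),
      (∀ s t, ‖f (s, t)‖ ≤ H s) ∧
      ∀ᶠ y in 𝓝 (0 : ℝ), ∀ x ∈ Set.Ioc (0 : ℝ) 1, doubleRiesz (fun s t => f (s, t)) x y =
        ∑ k ∈ Finset.range N, Complex.I * fourier (2 ^ k) (x : UnitAddCircle) := by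
  obtain ⟨χ, hχ, hχc, hχ₁⟩ := exists_contDiff_hasCompactSupport_eventuallyEq_one (0 : ℝ) two_pos
  obtain ⟨φ, hφ, hφc, hφ₀, hφ₁⟩ := exists_contDiff_hasCompactSupport_deriv_eventuallyEq_one
  obtain ⟨C, hC⟩ := exists_sum_norm_add_norm_deriv_deriv_le (contDiff_infty.1 hφ 3) hφc hφ₀
    (by simpa [Pi.one_def] using hφ₁.deriv_eq)
  let l (k : ℕ) : ℝ := 2 ^ k * (2 * π)
  have hl (k : ℕ) : 1 ≤ l k :=
    one_le_mul_of_one_le_of_one_le (one_le_pow₀ one_le_two) (by linarith [Real.pi_gt_three])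
  refine ⟨fun s => envelope χ s * C, (continuous_envelope (contDiff_infty.1 hχ 2)).mul_const C,
    (hasCompactSupport_envelope hχc).mul_right, fun N => ?_⟩
  obtain ⟨f, hf, hRf⟩ :=
    exists_schwartzMap_doubleRiesz_eq_sum_exp (Finset.range N) hl hχ hχc hφ hφc
  refine ⟨f, fun s t => (hf s t).trans ?_, ?_⟩
  · refine mul_le_mul_of_nonneg_left ?_ (envelope_nonneg χ s)
    simpa only [l, mul_assoc] using hC N (2 * π * t)
  · have hφl : ∀ᶠ y in 𝓝 (0 : ℝ), ∀ k ∈ Finset.range N, deriv φ (l k * y) = 1 :=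
      (eventually_all_finset _).2 fun k _ =>
        ((continuous_const_mul (l k)).tendsto' 0 0 (mul_zero _)).eventually hφ₁
    filter_upwards [hφl] with y hy x hx
    have hx₂ : x ∈ Metric.ball (0 : ℝ) 2 := by
      rw [mem_ball_zero_iff, Real.norm_of_nonneg hx.1.le]
      linarith [hx.2]
    rw [hRf x y (hχ₁ x hx₂) hy]
    refine Finset.sum_congr rfl fun k _ => ?_
    rw [fourier_coe_apply]
    push_cast [l]
    congr 2
    ring

lemma eLpNorm_sum_fourier {ι : Type*} {n : ι → ℤ} (hn : Function.Injective n) (S : Finset ι)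
    (c : ι → ℂ) :
    eLpNorm (fun x : ℝ => ∑ i ∈ S, c i * fourier (n i) (x : UnitAddCircle)) 2
      (volume.restrict (Set.Ioc 0 1)) = ENNReal.ofReal √(∑ i ∈ S, ‖c i‖ ^ 2) := by
  have hmk := UnitAddCircle.measurePreserving_mk 0
  rw [AddCircle.volume_eq_smul_haarAddCircle, ENNReal.ofReal_one, one_smul, zero_add] at hmk
  let P : C(UnitAddCircle, ℂ) := ∑ i ∈ S, c i • fourier (n i)
  let v := ContinuousMap.toLp (E := ℂ) 2 AddCircle.haarAddCircle ℂ P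
  have hv : ‖v‖ ^ 2 = ∑ i ∈ S, ‖c i‖ ^ 2 := by
    have horth := (orthonormal_fourier (T := 1)).comp n hn
    rw [← Complex.ofReal_inj]
    calc ((‖v‖ ^ 2 : ℝ) : ℂ) = inner ℂ v v := by simp [inner_self_eq_norm_sq_to_K]
      _ = ∑ i ∈ S, starRingEnd ℂ (c i) * c i := by
        simpa [v, P] using horth.inner_sum c c S
      _ = _ := by simp [Complex.conj_mul']
  calc _ = eLpNorm P 2 AddCircle.haarAddCircle := by
        simpa [P, Function.comp_def] using
          eLpNorm_comp_measurePreserving P.continuous.aestronglyMeasurable hmk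
    _ = ‖v‖ₑ := by
        rw [Lp.enorm_def, eLpNorm_congr_ae (ContinuousMap.coeFn_toLp _ P)]
    _ = ENNReal.ofReal √(∑ i ∈ S, ‖c i‖ ^ 2) := by
        rw [← hv, Real.sqrt_sq (norm_nonneg v), ofReal_norm]

lemma sqrt_le_eLpNorm_of_eq_lacunary {N : ℕ} {p : ℝ≥0∞} (hp : 2 ≤ p) {g : ℝ → ℂ}
    (hg : ∀ x ∈ Set.Ioc (0 : ℝ) 1,
      g x = ∑ k ∈ Finset.range N, Complex.I * fourier (2 ^ k) (x : UnitAddCircle)) :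
    ENNReal.ofReal √N ≤ eLpNorm g p volume := by
  let G (x : ℝ) : ℂ := ∑ k ∈ Finset.range N, Complex.I * fourier (2 ^ k) (x : UnitAddCircle)
  have hinj : Function.Injective fun k : ℕ => (2 ^ k : ℤ) := Int.pow_right_injective (by simp)
  have : IsProbabilityMeasure (volume.restrict (Set.Ioc (0 : ℝ) 1)) := ⟨by simp⟩
  have hG : eLpNorm G 2 (volume.restrict (Set.Ioc 0 1)) = ENNReal.ofReal √N :=
    (eLpNorm_sum_fourier hinj (Finset.range N) fun _ => Complex.I).trans (by simp)
  calc ENNReal.ofReal √N = eLpNorm G 2 (volume.restrict (Set.Ioc 0 1)) := hG.symm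
    _ ≤ eLpNorm G p (volume.restrict (Set.Ioc 0 1)) :=
        eLpNorm_le_eLpNorm_of_exponent_le hp (Continuous.aestronglyMeasurable (by fun_prop))
    _ = eLpNorm g p (volume.restrict (Set.Ioc 0 1)) :=
        eLpNorm_congr_ae ((ae_restrict_mem measurableSet_Ioc).mono fun x hx => (hg x hx).symm)
    _ ≤ eLpNorm g p volume := eLpNorm_mono_measure _ Measure.restrict_le_self

lemma le_essSup_of_eventually_nhds {X : Type*} [TopologicalSpace X] [MeasurableSpace X]
    {μ : Measure X} [μ.IsOpenPosMeasure] {g : X → ℝ≥0∞} {c : ℝ≥0∞} {x : X}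
    (h : ∀ᶠ y in 𝓝 x, c ≤ g y) : c ≤ essSup g μ := by
  have hdense := Measure.dense_of_ae (ENNReal.ae_le_essSup (μ := μ) g)
  obtain ⟨y, hy, hcy⟩ := hdense.inter_nhds_nonempty h
  exact hcy.trans hy

lemma eLpNorm_essSup_le {X Y E : Type*} [MeasurableSpace X] [MeasurableSpace Y]
    [NormedAddCommGroup E] {μ : Measure X} {ν : Measure Y} {f : X → Y → E} {H : X → ℝ}
    (hH : ∀ x, 0 ≤ H x) (hf : ∀ x y, ‖f x y‖ ≤ H x) (p : ℝ≥0∞) :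
    eLpNorm (fun x => (essSup (fun y => (‖f x y‖₊ : ℝ≥0∞)) ν).toReal) p μ ≤ eLpNorm H p μ := by
  refine eLpNorm_mono_real fun x => ?_
  rw [Real.norm_of_nonneg ENNReal.toReal_nonneg]
  refine ENNReal.toReal_le_of_le_ofReal (hH x) (essSup_le_of_ae_le _ (.of_forall fun y => ?_))
  exact (ofReal_norm (f x y)).symm.trans_le (ENNReal.ofReal_le_ofReal (hf x y))

theorem no_mixed_norm_estimate_ge_two_general (p : ℝ≥0∞) (hp : 2 ≤ p) :
    ¬ ∃ C : ℝ, ∀ f : 𝓢(ℝ × ℝ, ℂ),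
      essSup (fun y : ℝ => eLpNorm (fun x : ℝ => doubleRiesz (fun s t => f (s, t)) x y) p volume)
          volume ≤
        ENNReal.ofReal C * eLpNorm (fun x : ℝ =>
          (essSup (fun y : ℝ => (‖f (x, y)‖₊ : ℝ≥0∞)) volume).toReal) p volume := by
  rintro ⟨C, hC⟩
  obtain ⟨H, hH, hHc, hlac⟩ := exists_schwartzMap_doubleRiesz_eq_lacunary
  have hfin : ENNReal.ofReal C * eLpNorm H p volume ≠ ⊤ :=
    ENNReal.mul_ne_top ENNReal.ofReal_ne_top (hH.memLp_of_hasCompactSupport hHc).eLpNorm_ne_top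
  have sqrt_le (N : ℕ) : ENNReal.ofReal √N ≤ ENNReal.ofReal C * eLpNorm H p volume := by
    obtain ⟨f, hfH, hRf⟩ := hlac N
    have hH₀ (x : ℝ) : 0 ≤ H x := (norm_nonneg _).trans (hfH x 0)
    calc ENNReal.ofReal √N ≤ _ := le_essSup_of_eventually_nhds (hRf.mono fun y hy => ?_)
      _ ≤ _ := hC f
      _ ≤ _ := mul_le_mul_right (eLpNorm_essSup_le hH₀ hfH p) _
    exact sqrt_le_eLpNorm_of_eq_lacunary hp hy
  obtain ⟨N, hN⟩ := exists_nat_gt ((ENNReal.ofReal C * eLpNorm H p volume).toReal ^ 2)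
  refine (sqrt_le N).not_gt ((ENNReal.lt_ofReal_iff_toReal_lt hfin).2 ?_)
  exact Real.lt_sqrt_of_sq_lt hN

/-- For every `p ≥ 2` there is no constant `C_p` with
`‖‖R₁₂f(x,y)‖_{L^p_x}‖_{L^∞_y} ≤ C_p ‖‖f(x,y)‖_{L^∞_y}‖_{L^p_x}` for all Schwartz `f`. -/
theorem no_mixed_norm_estimate_ge_two (p : ℝ) (hp : 2 ≤ p) :
    ¬ ∃ C : ℝ, ∀ f : 𝓢(ℝ × ℝ, ℂ),
      essSup (fun y : ℝ =>
          eLpNorm (fun x : ℝ => doubleRiesz (fun s t => f (s, t)) x y)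
            (ENNReal.ofReal p) volume) volume ≤
        ENNReal.ofReal C *
          eLpNorm (fun x : ℝ =>
            (essSup (fun y : ℝ => (‖f (x, y)‖₊ : ℝ≥0∞)) volume).toReal)
            (ENNReal.ofReal p) volume :=
  no_mixed_norm_estimate_ge_two_general _ (by simpa using ENNReal.ofReal_le_ofReal hp)
end
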